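/- arXiv:2409.14148 — 2 statements merged into one kernel-verified Lean document; each statement's English description precedes it below -/
import Mathlib

section
/- Let 𝒰, 𝒳, 𝒴 be finite sets and let P_{UXY} be a pmf such that U → X → Y is a Markov chain (i.e., I(U;Y|X) = 0). Let g : 𝒴 → 𝒵 be any function and set Z = g(Y). Then I(U; X | Y) ≤ I(U; X | Z). -/
open scoped BigOperators

noncomputable section

open Classical in
/-- Pushforward of a finitely supported mass function along a map. -/
def pushf {Ω α : Type*} [Fintype Ω] (p : Ω → ℝ) (f : Ω → α) : α → ℝ :=
  fun a => ∑ ω, if f ω = a then p ω else 0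

/-- `p` is a probability mass function. -/
def IsPMF {α : Type*} [Fintype α] (p : α → ℝ) : Prop :=
  (∀ a, 0 ≤ p a) ∧ ∑ a, p a = 1

/-- Kullback–Leibler divergence `D(p‖q)` of mass functions, valued in `EReal`
(equal to `⊤` if `p` is not absolutely continuous w.r.t. `q`). -/
def klDiv {α : Type*} [Fintype α] (p q : α → ℝ) : EReal :=
  if ∀ a, q a = 0 → p a = 0 then ((∑ a, p a * Real.log (p a / q a) : ℝ) : EReal) else ⊤

/-- Shannon entropy. -/
def entropy {α : Type*} [Fintype α] (p : α → ℝ) : ℝ :=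
  -∑ a, p a * Real.log (p a)

/-- Conditional mutual information `I(A;B|C)` under the mass function `p`. -/
def condMI {Ω α β γ : Type*} [Fintype Ω] [Fintype α] [Fintype β] [Fintype γ]
    (p : Ω → ℝ) (A : Ω → α) (B : Ω → β) (C : Ω → γ) : ℝ :=
  entropy (pushf p (fun ω => (A ω, C ω))) + entropy (pushf p (fun ω => (B ω, C ω)))
    - entropy (pushf p (fun ω => (A ω, B ω, C ω))) - entropy (pushf p C)

/-- First marginal of a joint mass function. -/
def margFst {α β : Type*} [Fintype α] [Fintype β] (p : α × β → ℝ) : α → ℝ :=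
  fun a => ∑ b, p (a, b)

/-- Conditional mass function of the second coordinate given the first. -/
def condSnd {α β : Type*} [Fintype α] [Fintype β] (p : α × β → ℝ) : α → β → ℝ :=
  fun a b => p (a, b) / margFst p a

/-- Output distribution of a channel on an input distribution. -/
def outDist {α β : Type*} [Fintype α] [Fintype β] (ch : α → β → ℝ) (pa : α → ℝ) : β → ℝ :=
  fun b => ∑ a, pa a * ch a b

/-- The difference functional
`f(P'_X) = sup_{Q̂_X ≪ Q_X} D(P'_Y‖Q̂_Y) − D(P'_Z‖Q̂_Z)`. -/
def fdiff {X Y Z : Type*} [Fintype X] [Fintype Y] [Fintype Z]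
    (pYgX : X → Y → ℝ) (pZgX : X → Z → ℝ) (qYgX : X → Y → ℝ) (qZgX : X → Z → ℝ)
    (qX : X → ℝ) (pX' : X → ℝ) : EReal :=
  sSup {d : EReal | ∃ qhX : X → ℝ, IsPMF qhX ∧ (∀ x, qX x = 0 → qhX x = 0) ∧
    d = klDiv (outDist pYgX pX') (outDist qYgX qhX)
        - klDiv (outDist pZgX pX') (outDist qZgX qhX)}

/-- The quantity `G_{P_XY, Q_XY, P_XZ, Q_XZ}(R)`: the supremum over finite sets `𝒰`
(represented by `Fin m`) and channels `P_{U|X}` with `I_P(U;X|Y) ≤ R` and `I_P(U;X|Z) ≤ R`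
of `∑_u P_U(u) f(P_{X|U}(·|u))`. -/
def Gexp {X Y Z : Type*} [Fintype X] [Fintype Y] [Fintype Z]
    (pXY : X × Y → ℝ) (qXY : X × Y → ℝ) (pXZ : X × Z → ℝ) (qXZ : X × Z → ℝ)
    (R : ℝ) : EReal :=
  sSup {v : EReal | ∃ (m : ℕ) (ch : X → Fin m → ℝ),
    (∀ x, IsPMF (ch x)) ∧
    condMI (fun w : Fin m × X × Y => ch w.2.1 w.1 * pXY (w.2.1, w.2.2))
      (fun w => w.1) (fun w => w.2.1) (fun w => w.2.2) ≤ R ∧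
    condMI (fun w : Fin m × X × Z => ch w.2.1 w.1 * pXZ (w.2.1, w.2.2))
      (fun w => w.1) (fun w => w.2.1) (fun w => w.2.2) ≤ R ∧
    v = ∑ u : Fin m,
      ((∑ x, ch x u * margFst pXY x : ℝ) : EReal) *
        fdiff (condSnd pXY) (condSnd pXZ) (condSnd qXY) (condSnd qXZ)
          (margFst qXY)
          (fun x => ch x u * margFst pXY x / ∑ x', ch x' u * margFst pXY x')}

/-- The error exponent of distributed hypothesis testing, via the Ahlswede–Csiszár
multi-letter characterization. -/
def errExp {X W : Type*} [Fintype X] [Fintype W]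
    (pXW qXW : X × W → ℝ) (R : ℝ) : EReal :=
  sSup {v : EReal | ∃ n : ℕ, 0 < n ∧
    ∃ κ : (Fin n → X) → Fin (2 ^ ⌊(n : ℝ) * R⌋₊) → ℝ,
      (∀ x, IsPMF (κ x)) ∧
      v = (((n : ℝ)⁻¹ : ℝ) : EReal) *
        klDiv
          (fun mw : Fin (2 ^ ⌊(n : ℝ) * R⌋₊) × (Fin n → W) =>
            ∑ x : Fin n → X, (∏ i, pXW (x i, mw.2 i)) * κ x mw.1)
          (fun mw : Fin (2 ^ ⌊(n : ℝ) * R⌋₊) × (Fin n → W) =>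
            ∑ x : Fin n → X, (∏ i, qXW (x i, mw.2 i)) * κ x mw.1)}

theorem sum_pushf_mul {Ω α : Type*} [Fintype Ω] [Fintype α] (p : Ω → ℝ) (f : Ω → α)
    (h : α → ℝ) : ∑ a, pushf p f a * h a = ∑ ω, p ω * h (f ω) := by
  classical
  unfold pushf
  simp only [Finset.sum_mul]
  rw [Finset.sum_comm]
  refine Finset.sum_congr rfl fun ω _ => ?_
  rw [Finset.sum_eq_single (f ω)]
  · simp
  · intro b _ hb
    simp [Ne.symm hb]
  · simp

theorem entropy_pushf {Ω α : Type*} [Fintype Ω] [Fintype α] (p : Ω → ℝ) (f : Ω → α) :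
    entropy (pushf p f) = -∑ ω, p ω * Real.log (pushf p f (f ω)) := by
  unfold entropy
  rw [sum_pushf_mul p f (fun a => Real.log (pushf p f a))]

theorem entropy_pushf_congr {Ω α β : Type*} [Fintype Ω] [Fintype α] [Fintype β] (p : Ω → ℝ)
    (f : Ω → α) (f' : Ω → β) (h : ∀ ω ω', f ω = f ω' ↔ f' ω = f' ω') :
    entropy (pushf p f) = entropy (pushf p f') := by
  rw [entropy_pushf, entropy_pushf]
  have : ∀ ω, pushf p f (f ω) = pushf p f' (f' ω) := by
    intro ω
    unfold pushf
    refine Finset.sum_congr rfl fun ω1 _ => ?_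
    by_cases h1 : f ω1 = f ω
    · rw [if_pos h1, if_pos ((h _ _).1 h1)]
    · rw [if_neg h1, if_neg (fun h2 => h1 ((h _ _).2 h2))]
  simp only [this]

theorem pushf_nonneg {Ω α : Type*} [Fintype Ω] (p : Ω → ℝ) (hp : ∀ ω, 0 ≤ p ω)
    (f : Ω → α) (a : α) : 0 ≤ pushf p f a := by
  unfold pushf
  refine Finset.sum_nonneg fun ω _ => ?_
  split_ifs
  · exact hp ω
  · exact le_rfl

theorem pushf_pos {Ω α : Type*} [Fintype Ω] (p : Ω → ℝ) (hp : ∀ ω, 0 ≤ p ω)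
    (f : Ω → α) (ω : Ω) (h : 0 < p ω) : 0 < pushf p f (f ω) := by
  classical
  unfold pushf
  refine Finset.sum_pos' (fun ω _ => ?_) ⟨ω, Finset.mem_univ _, by simpa using h⟩
  split_ifs
  · exact hp _
  · exact le_rfl

theorem pushf_marg {Ω α γ : Type*} [Fintype Ω] [Fintype α] (p : Ω → ℝ)
    (A : Ω → α) (C : Ω → γ) (c : γ) :
    ∑ a, pushf p (fun ω => (A ω, C ω)) (a, c) = pushf p C c := by
  classical
  unfold pushf
  rw [Finset.sum_comm]
  refine Finset.sum_congr rfl fun ω _ => ?_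
  by_cases h : C ω = c <;> simp [h]

theorem condMI_nonneg {Ω α β γ : Type*} [Fintype Ω] [Fintype α] [Fintype β] [Fintype γ]
    (p : Ω → ℝ) (hp : ∀ ω, 0 ≤ p ω) (A : Ω → α) (B : Ω → β) (C : Ω → γ) :
    0 ≤ condMI p A B C := by
  unfold condMI
  simp only [entropy_pushf]
  set r := pushf p (fun ω => (A ω, C ω)) with hr
  set s := pushf p (fun ω => (B ω, C ω)) with hs
  set t := pushf p (fun ω => (A ω, B ω, C ω)) with ht
  set q := pushf p C with hq
  have r0 : ∀ x, 0 ≤ r x := pushf_nonneg p hp _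
  have s0 : ∀ x, 0 ≤ s x := pushf_nonneg p hp _
  have t0 : ∀ x, 0 ≤ t x := pushf_nonneg p hp _
  have q0 : ∀ x, 0 ≤ q x := pushf_nonneg p hp _
  have key : ∀ ω, p ω - p ω * (r (A ω, C ω) * s (B ω, C ω) / q (C ω) / t (A ω, B ω, C ω)) ≤
      p ω * Real.log (t (A ω, B ω, C ω)) + p ω * Real.log (q (C ω))
      - p ω * Real.log (r (A ω, C ω)) - p ω * Real.log (s (B ω, C ω)) := by
    intro ω
    rcases (hp ω).eq_or_lt with h | h
    · simp [← h]
    have hr1 : 0 < r (A ω, C ω) := pushf_pos p hp (fun ω => (A ω, C ω)) ω h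
    have hs1 : 0 < s (B ω, C ω) := pushf_pos p hp (fun ω => (B ω, C ω)) ω h
    have ht1 : 0 < t (A ω, B ω, C ω) := pushf_pos p hp (fun ω => (A ω, B ω, C ω)) ω h
    have hq1 : 0 < q (C ω) := pushf_pos p hp C ω h
    have hl := Real.log_le_sub_one_of_pos
      (show 0 < r (A ω, C ω) * s (B ω, C ω) / q (C ω) / t (A ω, B ω, C ω) by positivity)
    rw [Real.log_div (by positivity) (by positivity), Real.log_div (by positivity) (by positivity),
      Real.log_mul (by positivity) (by positivity)] at hl
    have := mul_le_mul_of_nonneg_left hl h.le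
    linarith
  have h1 := Finset.sum_le_sum fun ω (_ : ω ∈ Finset.univ) => key ω
  simp only [Finset.sum_sub_distrib, Finset.sum_add_distrib] at h1
  have h2 : ∑ ω, p ω * (r (A ω, C ω) * s (B ω, C ω) / q (C ω) / t (A ω, B ω, C ω))
      ≤ ∑ ω, p ω := by
    rw [← sum_pushf_mul p (fun ω => (A ω, B ω, C ω))
      (fun x => r (x.1, x.2.2) * s (x.2.1, x.2.2) / q x.2.2 / t x), ← ht]
    calc _ ≤ ∑ x : α × β × γ, r (x.1, x.2.2) * s (x.2.1, x.2.2) / q x.2.2 := by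
          refine Finset.sum_le_sum fun x _ => ?_
          have : 0 ≤ r (x.1, x.2.2) * s (x.2.1, x.2.2) / q x.2.2 :=
            div_nonneg (mul_nonneg (r0 _) (s0 _)) (q0 _)
          rcases (t0 x).eq_or_lt with h | h
          · simpa [← h] using this
          · rw [mul_div_cancel₀ _ h.ne']
      _ = ∑ c, ∑ a, ∑ b, r (a, c) * s (b, c) / q c := by
          simp only [Fintype.sum_prod_type]
          rw [Finset.sum_comm (s := (Finset.univ : Finset γ))]
          refine Finset.sum_congr rfl fun a _ => ?_
          rw [Finset.sum_comm]
      _ = ∑ c, q c := by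
          refine Finset.sum_congr rfl fun c _ => ?_
          simp only [← Finset.sum_div, ← Finset.mul_sum, ← Finset.sum_mul]
          rw [hr, hs, pushf_marg, pushf_marg, ← hq, mul_self_div_self]
      _ = ∑ ω, p ω := by
          have := sum_pushf_mul p C (fun _ => 1)
          simpa using this
  linarith

/-- If `U → X → Y` is a Markov chain and `Z = g(Y)` for a function `g`,
then `I(U;X|Y) ≤ I(U;X|Z)`. -/
theorem condMI_le_condMI_of_comp {U X Y Z : Type*}
    [Fintype U] [Fintype X] [Fintype Y] [Fintype Z]
    (P : U × X × Y → ℝ) (hP : IsPMF P)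
    (hMarkov : condMI P (fun w => w.1) (fun w => w.2.2) (fun w => w.2.1) = 0)
    (g : Y → Z) :
    condMI P (fun w => w.1) (fun w => w.2.1) (fun w => w.2.2)
      ≤ condMI P (fun w => w.1) (fun w => w.2.1) (fun w => g w.2.2) := by
  have h1 := condMI_nonneg P hP.1 (fun w => w.1) (fun w => w.2.2) (fun w => g w.2.2)
  have h2 := condMI_nonneg P hP.1 (fun w => w.1) (fun w => g w.2.2) (fun w => w.2.1)
  unfold condMI at *
  have e1 := entropy_pushf_congr P (fun w => (w.2.2, g w.2.2)) (fun w => w.2.2) (by grind)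
  have e2 := entropy_pushf_congr P (fun w => (w.1, w.2.2, g w.2.2)) (fun w => (w.1, w.2.2))
    (by grind)
  have e3 := entropy_pushf_congr P (fun w => (w.2.2, w.2.1)) (fun w => (w.2.1, w.2.2)) (by grind)
  have e4 := entropy_pushf_congr P (fun w => (g w.2.2, w.2.1)) (fun w => (w.2.1, g w.2.2))
    (by grind)
  have e5 := entropy_pushf_congr P (fun w => (w.1, w.2.2, w.2.1)) (fun w => (w.1, w.2.1, w.2.2))
    (by grind)
  have e6 := entropy_pushf_congr P (fun w => (w.1, g w.2.2, w.2.1))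
    (fun w => (w.1, w.2.1, g w.2.2)) (by grind)
  linarith

end
end

section
/- Let 𝒳, 𝒴, 𝒵, ℳ be finite sets, let P_{XYZ} be a pmf, and let (M, X^n, Y^n, Z^n) be distributed according to P_{M|X^n} ∏_{i=1}^n P_{X_i Y_i Z_i}. Setting U_i := (M, Y^{i−1}, Z_{i+1}^n), it holds that ∑_{i=1}^n I(U_i; X_i | Z_i) ≤ I(M; X^n | Z^n) ≤ H(M) ≤ log|ℳ|, and likewise ∑_{i=1}^n I(U_i; X_i | Y_i) ≤ H(M) ≤ log|ℳ|. -/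
open scoped BigOperators

noncomputable section

open Finset in
/-- Abstract polymatroid inequality. -/
theorem aux_subm {L : Type*} [SemilatticeInf L] (H : L → ℝ)
    (hs : ∀ a b c, H (a ⊓ b ⊓ c) + H c ≤ H (a ⊓ c) + H (b ⊓ c)) (a g c : L) (h : c ≤ g) :
    H (a ⊓ c) - H c ≤ H (a ⊓ g) - H g := by
  have := hs a c g
  rw [inf_assoc, inf_eq_left.2 h] at this
  linarith

theorem aux_mono {L : Type*} [SemilatticeInf L] (H : L → ℝ)
    (hs : ∀ a b c, H (a ⊓ b ⊓ c) + H c ≤ H (a ⊓ c) + H (b ⊓ c)) (a c : L) (h : a ≤ c) :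
    H c ≤ H a := by
  have := hs a a c
  rw [inf_idem, inf_eq_left.2 h] at this
  linarith

theorem aux_sub {J L : Type*} [DecidableEq J] [SemilatticeInf L] [OrderTop L] (H : L → ℝ)
    (hs : ∀ a b c, H (a ⊓ b ⊓ c) + H c ≤ H (a ⊓ c) + H (b ⊓ c)) (f g : J → L) (S : Finset J)
    (c : L) (hc : ∀ j ∈ S, c ≤ g j) :
    H (S.inf f ⊓ c) - H c ≤ ∑ j ∈ S, (H (f j ⊓ g j) - H (g j)) := by
  induction S using Finset.induction_on with
  | empty => simp
  | insert j S hj ih =>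
    rw [Finset.sum_insert hj, Finset.inf_insert, inf_assoc]
    have h1 := ih (fun k hk => hc k (Finset.mem_insert_of_mem hk))
    have h2 := aux_subm H hs (f j) (g j) (S.inf f ⊓ c)
      (inf_le_right.trans (hc j (Finset.mem_insert_self _ _)))
    linarith

theorem aux_tel {J L : Type*} [LinearOrder J] [Fintype J] [SemilatticeInf L] [OrderTop L]
    (H : L → ℝ) (x : J → L) (c : L) :
    ∑ i, (H (x i ⊓ ((Finset.univ.filter (· < i)).inf x ⊓ c)) -
      H ((Finset.univ.filter (· < i)).inf x ⊓ c)) = H (Finset.univ.inf x ⊓ c) - H c := by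
  have key : ∀ S : Finset J, ∑ i ∈ S, (H (x i ⊓ ((S.filter (· < i)).inf x ⊓ c)) -
      H ((S.filter (· < i)).inf x ⊓ c)) = H (S.inf x ⊓ c) - H c := by
    intro S
    induction S using Finset.induction_on_max with
    | empty => simp
    | insert a s hs ih =>
      have ha : a ∉ s := fun h => lt_irrefl _ (hs a h)
      rw [Finset.sum_insert ha]
      have e1 : (insert a s).filter (· < a) = s := by
        ext k
        simp only [Finset.mem_filter, Finset.mem_insert]
        constructor
        · rintro ⟨rfl | h, h2⟩
          · exact absurd h2 (lt_irrefl _)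
          · exact h
        · intro h
          exact ⟨Or.inr h, hs k h⟩
      have e2 : ∀ i ∈ s, (insert a s).filter (· < i) = s.filter (· < i) := by
        intro i hi
        rw [Finset.filter_insert, if_neg (not_lt.2 (hs i hi).le)]
      rw [e1, Finset.sum_congr rfl (fun i hi => by rw [e2 i hi]), ih, Finset.inf_insert, inf_assoc]
      ring
  exact key Finset.univ

theorem aux_abstract {J L : Type*} [LinearOrder J] [Fintype J] [SemilatticeInf L] [OrderTop L]
    (H : L → ℝ) (h0 : H ⊤ = 0)
    (hs : ∀ a b c, H (a ⊓ b ⊓ c) + H c ≤ H (a ⊓ c) + H (b ⊓ c))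
    (m : L) (x y z : J → L) (X Y Z : L)
    (hX : X = Finset.univ.inf x) (hY : Y = Finset.univ.inf y) (hZ : Z = Finset.univ.inf z)
    (E1 : H (m ⊓ X ⊓ Y ⊓ Z) + H X = H (X ⊓ Y ⊓ Z) + H (m ⊓ X))
    (E2 : H (X ⊓ Y ⊓ Z) = ∑ j, H (x j ⊓ y j ⊓ z j)) :
    ∑ i, (H (m ⊓ (Finset.univ.filter (· < i)).inf y ⊓ (Finset.univ.filter (i < ·)).inf z ⊓ z i)
        + H (x i ⊓ z i)
        - H (m ⊓ (Finset.univ.filter (· < i)).inf y ⊓ (Finset.univ.filter (i < ·)).inf z ⊓ x i ⊓ z i)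
        - H (z i)) ≤ H (m ⊓ Z) + H (X ⊓ Z) - H (m ⊓ X ⊓ Z) - H Z := by
  have hXj : ∀ j, X ≤ x j := fun j => hX ▸ Finset.inf_le (Finset.mem_univ j)
  have hZj : ∀ j, Z ≤ z j := fun j => hZ ▸ Finset.inf_le (Finset.mem_univ j)
  have a1 : H (X ⊓ Y ⊓ Z) - H (X ⊓ Z) ≤ ∑ j, (H (x j ⊓ y j ⊓ z j) - H (x j ⊓ z j)) := by
    have := aux_sub H hs y (fun j => x j ⊓ z j) Finset.univ (X ⊓ Z)
      (fun j _ => inf_le_inf (hXj j) (hZj j))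
    rw [← hY] at this
    have e : Y ⊓ (X ⊓ Z) = X ⊓ Y ⊓ Z := by ac_rfl
    rw [e] at this
    refine this.trans (le_of_eq (Finset.sum_congr rfl fun j _ => ?_))
    congr 2
    ac_rfl
  have a2 : H (X ⊓ Z) ≤ ∑ j, H (x j ⊓ z j) := by
    have := aux_sub H hs (fun j => x j ⊓ z j) (fun _ => ⊤) Finset.univ ⊤ (fun j _ => le_rfl)
    simp only [inf_top_eq, h0, sub_zero] at this
    have e : (Finset.univ.inf fun j => x j ⊓ z j) = Finset.univ.inf x ⊓ Finset.univ.inf z :=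
      Finset.inf_inf
    rw [e, ← hX, ← hZ] at this
    exact this
  have a3 : H Z ≤ ∑ j, H (z j) := by
    have := aux_sub H hs z (fun _ => ⊤) Finset.univ ⊤ (fun j _ => le_rfl)
    simp only [inf_top_eq, h0, sub_zero] at this
    rwa [← hZ] at this
  rw [Finset.sum_sub_distrib] at a1
  have D : ∑ j, (H (y j ⊓ (x j ⊓ z j)) - H (x j ⊓ z j)) + H (m ⊓ X ⊓ Z) ≤ H (m ⊓ X ⊓ Y ⊓ Z) := by
    have e : ∑ j, H (y j ⊓ (x j ⊓ z j)) = ∑ j, H (x j ⊓ y j ⊓ z j) :=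
      Finset.sum_congr rfl fun j _ => by congr 1; ac_rfl
    rw [Finset.sum_sub_distrib, e]
    have := hs m Z X
    have e1 : m ⊓ Z ⊓ X = m ⊓ X ⊓ Z := by ac_rfl
    have e2 : Z ⊓ X = X ⊓ Z := by ac_rfl
    rw [e1, e2] at this
    linarith
  have step : ∀ i, (H (m ⊓ (Finset.univ.filter (· < i)).inf y ⊓ (Finset.univ.filter (i < ·)).inf z ⊓ z i)
        + H (x i ⊓ z i)
        - H (m ⊓ (Finset.univ.filter (· < i)).inf y ⊓ (Finset.univ.filter (i < ·)).inf z ⊓ x i ⊓ z i)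
        - H (z i)) ≤ (H (x i ⊓ z i) - H (z i)) -
        (H (x i ⊓ ((Finset.univ.filter (· < i)).inf x ⊓ (m ⊓ Z))) -
          H ((Finset.univ.filter (· < i)).inf x ⊓ (m ⊓ Z))) := by
    intro i
    set Yi := (Finset.univ.filter (· < i)).inf y with hYi
    set Xi := (Finset.univ.filter (· < i)).inf x with hXi
    set Zi := (Finset.univ.filter (i < ·)).inf z with hZi
    have hXXi : X ≤ Xi := hX ▸ Finset.inf_mono (Finset.filter_subset _ _)
    have hZZi : Z ≤ Zi := hZ ▸ Finset.inf_mono (Finset.filter_subset _ _)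
    -- conditioning reduces entropy
    have b1 := aux_subm H hs (x i) (m ⊓ Yi ⊓ Zi ⊓ z i) (Yi ⊓ (Xi ⊓ (m ⊓ Z)))
      (le_inf (le_inf (le_inf (inf_le_right.trans (inf_le_right.trans inf_le_left)) inf_le_left)
        (inf_le_right.trans (inf_le_right.trans (inf_le_right.trans hZZi))))
        (inf_le_right.trans (inf_le_right.trans (inf_le_right.trans (hZj i)))))
    have e1 : x i ⊓ (m ⊓ Yi ⊓ Zi ⊓ z i) = m ⊓ Yi ⊓ Zi ⊓ x i ⊓ z i := by ac_rfl
    rw [e1] at b1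
    -- Markov
    have b2 := aux_subm H hs Yi (x i ⊓ (Xi ⊓ (m ⊓ Z))) (m ⊓ X ⊓ Z)
      (le_inf (inf_le_left.trans (inf_le_right.trans (hXj i)))
        (le_inf (inf_le_left.trans (inf_le_right.trans hXXi))
          (inf_le_inf_right _ inf_le_left)))
    have b3 := aux_sub H hs y (fun j => x j ⊓ z j) (Finset.univ.filter (· < i)) (Xi ⊓ (m ⊓ Z))
      (fun j hj => inf_le_inf (Finset.inf_le hj) (inf_le_right.trans (hZj j)))
    rw [← hYi] at b3
    have b4 := aux_sub H hs y (fun j => x j ⊓ z j) (Finset.univ.filter (fun j => ¬ j < i))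
      (Yi ⊓ (m ⊓ X ⊓ Z))
      (fun j hj => inf_le_right.trans (inf_le_inf (inf_le_right.trans (hXj j)) (hZj j)))
    have e2 : (Finset.univ.filter (fun j => ¬ j < i)).inf y ⊓ (Yi ⊓ (m ⊓ X ⊓ Z)) = m ⊓ X ⊓ Y ⊓ Z := by
      have : (Finset.univ.filter (fun j => ¬ j < i)).inf y ⊓ Yi = Y := by
        rw [hYi, hY, ← Finset.inf_union, Finset.union_comm, Finset.filter_union_filter_not_eq]
      rw [← inf_assoc, this]; ac_rfl
    rw [e2] at b4
    have b5 := Finset.sum_filter_add_sum_filter_not Finset.univ (· < i)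
      (fun j => H (y j ⊓ (x j ⊓ z j)) - H (x j ⊓ z j))
    have e3 : Yi ⊓ (x i ⊓ (Xi ⊓ (m ⊓ Z))) = x i ⊓ (Yi ⊓ (Xi ⊓ (m ⊓ Z))) := by ac_rfl
    rw [e3] at b2
    linarith
  refine (Finset.sum_le_sum fun i _ => step i).trans ?_
  rw [Finset.sum_sub_distrib, aux_tel H x (m ⊓ Z), Finset.sum_sub_distrib, ← hX]
  have e : X ⊓ (m ⊓ Z) = m ⊓ X ⊓ Z := by ac_rfl
  rw [e]
  linarith

theorem pushf_sum {Ω α : Type*} [Fintype Ω] [Fintype α] (p : Ω → ℝ) (f : Ω → α) (F : α → ℝ) :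
    ∑ a, pushf p f a * F a = ∑ ω, p ω * F (f ω) := by
  classical
  unfold pushf
  simp only [Finset.sum_mul]
  rw [Finset.sum_comm]
  refine Finset.sum_congr rfl fun ω _ => ?_
  simp [ite_mul]

theorem pushf_ge {Ω α : Type*} [Fintype Ω] (p : Ω → ℝ) (hp : ∀ ω, 0 ≤ p ω) (f : Ω → α)
    (ω : Ω) : p ω ≤ pushf p f (f ω) := by
  classical
  unfold pushf
  have := Finset.single_le_sum (f := fun ω' => if f ω' = f ω then p ω' else 0)
    (fun ω' _ => by split_ifs <;> simp [hp]) (Finset.mem_univ ω)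
  simpa using this

theorem pushf_total {Ω α : Type*} [Fintype Ω] [Fintype α] (p : Ω → ℝ) (f : Ω → α) :
    ∑ a, pushf p f a = ∑ ω, p ω := by
  simpa using pushf_sum p f (fun _ => 1)

open Classical in
/-- Entropy of a partition. -/
def entK {Ω : Type*} [Fintype Ω] (p : Ω → ℝ) (r : Setoid Ω) : ℝ :=
  -∑ ω, p ω * Real.log (∑ ω', if r ω' ω then p ω' else 0)

theorem entropy_ker {Ω α : Type*} [Fintype Ω] [Fintype α] (p : Ω → ℝ) (f : Ω → α) :
    entropy (pushf p f) = entK p (Setoid.ker f) := by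
  rw [entropy_pushf]
  rfl

theorem ker_pair {Ω α β : Type*} (f : Ω → α) (g : Ω → β) :
    Setoid.ker (fun ω => (f ω, g ω)) = Setoid.ker f ⊓ Setoid.ker g := by
  ext a b
  simp [Setoid.ker_def, Setoid.inf_def]

theorem setoid_finset_inf {Ω J : Type*} (S : Finset J) (r : J → Setoid Ω) (a b : Ω) :
    (S.inf r) a b ↔ ∀ j ∈ S, r j a b := by
  classical
  induction S using Finset.induction_on with
  | empty =>
    rw [Finset.inf_empty]
    simp [Setoid.top_def]
  | insert j S hj ih =>
    rw [Finset.inf_insert, Finset.forall_mem_insert, ← ih]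
    rfl

theorem ker_pi {Ω J α : Type*} [Fintype J] (q : J → Prop) [DecidablePred q] (f : J → Ω → α) :
    Setoid.ker (fun ω => fun j : {j // q j} => f j.1 ω) =
      (Finset.univ.filter q).inf (fun j => Setoid.ker (f j)) := by
  ext a b
  rw [setoid_finset_inf]
  simp [Setoid.ker_def, funext_iff]

theorem ker_pi_univ {Ω J α : Type*} [Fintype J] (f : Ω → J → α) :
    Setoid.ker f = Finset.univ.inf (fun j => Setoid.ker (fun ω => f ω j)) := by
  ext a b
  rw [setoid_finset_inf]
  simp [Setoid.ker_def, funext_iff]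

theorem entK_subm {Ω : Type*} [Fintype Ω] (p : Ω → ℝ) (hp : ∀ ω, 0 ≤ p ω) (a b c : Setoid Ω) :
    entK p (a ⊓ b ⊓ c) + entK p c ≤ entK p (a ⊓ c) + entK p (b ⊓ c) := by
  classical
  have := condMI_nonneg p hp (Quotient.mk a) (Quotient.mk b) (Quotient.mk c)
  unfold condMI at this
  simp only [entropy_ker, ker_pair] at this
  have e : ∀ r : Setoid Ω, Setoid.ker (Quotient.mk r) = r := fun r => Setoid.ker_mk_eq r
  simp only [e] at this
  rw [inf_assoc]
  linarith

theorem entK_top {Ω : Type*} [Fintype Ω] (p : Ω → ℝ) (hp : ∑ ω, p ω = 1) : entK p ⊤ = 0 := by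
  unfold entK
  simp [Setoid.top_def, hp]

theorem entropy_le_log {α : Type*} [Fintype α] (q : α → ℝ) (hq : IsPMF q) :
    entropy q ≤ Real.log (Fintype.card α) := by
  obtain ⟨h0, h1⟩ := hq
  have hne : Nonempty α := by
    by_contra h
    rw [not_nonempty_iff] at h
    simp at h1
  have hc : (0 : ℝ) < Fintype.card α := by exact_mod_cast Fintype.card_pos
  have key : ∀ a, -(q a * Real.log (q a)) - q a * Real.log (Fintype.card α)
      ≤ 1 / (Fintype.card α : ℝ) - q a := by
    intro a
    rcases (h0 a).eq_or_lt with h | h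
    · rw [← h]; simp
    · have := Real.log_le_sub_one_of_pos (div_pos one_pos (mul_pos h hc))
      rw [Real.log_div one_ne_zero (mul_pos h hc).ne', Real.log_mul h.ne' hc.ne', Real.log_one] at this
      have h2 := mul_le_mul_of_nonneg_left this h.le
      have h3 : q a * (1 / (q a * (Fintype.card α : ℝ)) - 1) = 1 / (Fintype.card α : ℝ) - q a := by
        field_simp
      rw [h3] at h2
      linarith
  have := Finset.sum_le_sum fun a (_ : a ∈ Finset.univ) => key a
  simp only [Finset.sum_sub_distrib, Finset.sum_neg_distrib, ← Finset.sum_mul, h1] at this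
  simp at this
  unfold entropy
  have h5 : (Fintype.card α : ℝ) * (Fintype.card α : ℝ)⁻¹ = 1 := by field_simp
  linarith

/-- The joint law. -/
def jointP {X Y Z M : Type*} {n : ℕ} (P : X × Y × Z → ℝ) (κ : (Fin n → X) → M → ℝ) :
    M × (Fin n → X) × (Fin n → Y) × (Fin n → Z) → ℝ :=
  fun w => κ w.2.1 w.1 * ∏ j, P (w.2.1 j, w.2.2.1 j, w.2.2.2 j)

section law
variable {X Y Z M : Type*} [Fintype X] [Fintype Y] [Fintype Z] [Fintype M] {n : ℕ}
    (P : X × Y × Z → ℝ) (hP : IsPMF P) (κ : (Fin n → X) → M → ℝ) (hκ : ∀ x, IsPMF (κ x))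

/-- Unzipping of triples of sequences. -/
def unz : (Fin n → X) × (Fin n → Y) × (Fin n → Z) ≃ (Fin n → X × Y × Z) where
  toFun v := fun j => (v.1 j, v.2.1 j, v.2.2 j)
  invFun u := (fun j => (u j).1, fun j => (u j).2.1, fun j => (u j).2.2)
  left_inv _ := rfl
  right_inv _ := rfl

include hκ in
theorem joint_sum (F : (Fin n → X × Y × Z) → ℝ) :
    ∑ w, jointP P κ w * F (unz w.2) = ∑ u : Fin n → X × Y × Z, (∏ j, P (u j)) * F u := by
  rw [Fintype.sum_prod_type, Finset.sum_comm, ← unz.sum_comp]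
  refine Finset.sum_congr rfl fun v _ => ?_
  dsimp only
  rw [← Finset.sum_mul]
  congr 1
  unfold jointP
  dsimp only
  rw [← Finset.sum_mul, (hκ v.1).2, one_mul]
  rfl

include hP hκ in
theorem joint_total : ∑ w, jointP P κ w = 1 := by
  classical
  have := joint_sum P κ hκ (fun _ => 1)
  simp only [mul_one] at this
  rw [this, ← Fintype.piFinset_univ, ← Finset.prod_univ_sum]
  simp [hP.2]

include hP hκ in
theorem joint_nonneg : ∀ w, 0 ≤ jointP P κ w := fun w =>
  mul_nonneg ((hκ _).1 _) (Finset.prod_nonneg fun _ _ => hP.1 _)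

include hκ in
theorem joint_pv (v) : pushf (jointP P κ) (fun w => w.2) v = ∏ j, P (unz v j) := by
  classical
  have := joint_sum P κ hκ (fun u => if u = unz v then 1 else 0)
  simp only [mul_ite, mul_one, mul_zero, Finset.sum_ite_eq', Finset.mem_univ, if_true,
    EmbeddingLike.apply_eq_iff_eq] at this
  rw [← this]
  unfold pushf
  refine Finset.sum_congr rfl fun w _ => ?_
  congr

include hP hκ in
theorem joint_pj (i : Fin n) (a) :
    pushf (jointP P κ) (fun w => unz w.2 i) a = P a := by
  classical
  have := joint_sum P κ hκ (fun u => if u i = a then 1 else 0)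
  have e : ∀ u : Fin n → X × Y × Z, (∏ j, P (u j)) * (if u i = a then 1 else 0) =
      ∏ j, (P (u j) * if j = i then (if u j = a then 1 else 0) else 1) := by
    intro u
    rw [Finset.prod_mul_distrib]
    congr 1
    rw [Finset.prod_ite_eq']
    simp
  rw [Finset.sum_congr rfl fun u _ => e u, ← Fintype.piFinset_univ,
    ← Finset.prod_univ_sum (fun _ => Finset.univ)
      (fun j v => P v * if j = i then (if v = a then 1 else 0) else 1)] at this
  rw [Finset.prod_eq_single i] at this
  · simp only [if_true, mul_ite, mul_one, mul_zero, Finset.sum_ite_eq', Finset.mem_univ] at this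
    rw [← this]
    unfold pushf
    refine Finset.sum_congr rfl fun w _ => ?_
    congr
  · intro j _ hj
    simp [hj, hP.2]
  · simp

include hκ in
theorem joint_pmx (m : M) (x : Fin n → X) :
    pushf (jointP P κ) (fun w => (w.1, w.2.1)) (m, x) =
      κ x m * pushf (jointP P κ) (fun w => w.2.1) x := by
  classical
  have e1 : pushf (jointP P κ) (fun w => (w.1, w.2.1)) (m, x) =
      κ x m * ∑ t : (Fin n → Y) × (Fin n → Z), ∏ j, P (x j, t.1 j, t.2 j) := by
    unfold pushf
    rw [Fintype.sum_prod_type, Finset.sum_eq_single m, Fintype.sum_prod_type,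
      Finset.sum_eq_single x]
    · simp [jointP, Finset.mul_sum]
    · intro b _ hb
      simp [hb]
    · simp
    · intro b _ hb
      simp [hb]
    · simp
  rw [e1, ← pushf_marg (jointP P κ) (fun w => w.1) (fun w => w.2.1) x]
  congr 1
  have e2 : ∀ m, pushf (jointP P κ) (fun w => (w.1, w.2.1)) (m, x) =
      κ x m * ∑ t : (Fin n → Y) × (Fin n → Z), ∏ j, P (x j, t.1 j, t.2 j) := by
    intro m
    unfold pushf
    rw [Fintype.sum_prod_type, Finset.sum_eq_single m, Fintype.sum_prod_type,
      Finset.sum_eq_single x]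
    · simp [jointP, Finset.mul_sum]
    · intro b _ hb
      simp [hb]
    · simp
    · intro b _ hb
      simp [hb]
    · simp
  rw [Finset.sum_congr rfl fun m _ => e2 m, ← Finset.sum_mul, (hκ x).2, one_mul]

include hP hκ in
theorem joint_E2 : entropy (pushf (jointP P κ) (fun w => w.2)) =
    ∑ i : Fin n, entropy (pushf (jointP P κ) (fun w => unz w.2 i)) := by
  simp only [entropy_pushf, joint_pv P κ hκ, joint_pj P hP κ hκ]
  rw [Finset.sum_neg_distrib, Finset.sum_comm]
  congr 1
  refine Finset.sum_congr rfl fun w _ => ?_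
  rw [← Finset.mul_sum]
  rcases eq_or_ne (jointP P κ w) 0 with h | h
  · simp [h]
  · congr 1
    refine Real.log_prod fun j _ h0 => h ?_
    unfold jointP
    rw [Finset.prod_eq_zero (Finset.mem_univ j) h0, mul_zero]

include hP hκ in
theorem joint_E1 : entropy (pushf (jointP P κ) (fun w => w)) +
    entropy (pushf (jointP P κ) (fun w => w.2.1)) =
    entropy (pushf (jointP P κ) (fun w => w.2)) +
    entropy (pushf (jointP P κ) (fun w => (w.1, w.2.1))) := by
  classical
  simp only [entropy_pushf, joint_pv P κ hκ, joint_pmx P κ hκ]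
  rw [← neg_add, ← neg_add, ← Finset.sum_add_distrib, ← Finset.sum_add_distrib]
  congr 1
  refine Finset.sum_congr rfl fun w _ => ?_
  rcases eq_or_ne (jointP P κ w) 0 with h | h
  · simp [h]
  · have hid : pushf (jointP P κ) (fun w => w) w = κ w.2.1 w.1 * ∏ j, P (unz w.2 j) := by
      unfold pushf
      rw [Finset.sum_eq_single w]
      · simp only [if_true]
        rfl
      · intro b _ hb
        simp [hb]
      · simp
    have hpos := lt_of_le_of_ne (joint_nonneg P hP κ hκ w) h.symm
    have h1 := hpos.trans_le (pushf_ge _ (joint_nonneg P hP κ hκ) (fun w => w.2.1) w)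
    have h2 : κ w.2.1 w.1 * ∏ j, P (unz w.2 j) ≠ 0 := h
    have h3 := left_ne_zero_of_mul h2
    have h4 := right_ne_zero_of_mul h2
    rw [hid, Real.log_mul h3 h4, Real.log_mul h3 h1.ne']
    ring

end law

/-- With `U_i = (M, Y^{i-1}, Z_{i+1}^n)`:
`∑_i I(U_i;X_i|Z_i) ≤ I(M;X^n|Z^n) ≤ H(M) ≤ log|ℳ|` and
`∑_i I(U_i;X_i|Y_i) ≤ H(M) ≤ log|ℳ|`. -/
theorem rate_constraints_aux {X Y Z M : Type*}
    [Fintype X] [Fintype Y] [Fintype Z] [Fintype M] (n : ℕ)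
    (P : X × Y × Z → ℝ) (hP : IsPMF P)
    (κ : (Fin n → X) → M → ℝ) (hκ : ∀ x, IsPMF (κ x)) :
    (∑ i : Fin n,
        condMI
          (fun w : M × (Fin n → X) × (Fin n → Y) × (Fin n → Z) =>
            κ w.2.1 w.1 * ∏ j, P (w.2.1 j, w.2.2.1 j, w.2.2.2 j))
          (fun w => (w.1, fun j : {j : Fin n // (j : ℕ) < (i : ℕ)} => w.2.2.1 j.1,
            fun j : {j : Fin n // (i : ℕ) < (j : ℕ)} => w.2.2.2 j.1))
          (fun w => w.2.1 i) (fun w => w.2.2.2 i)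
      ≤ condMI
          (fun w : M × (Fin n → X) × (Fin n → Y) × (Fin n → Z) =>
            κ w.2.1 w.1 * ∏ j, P (w.2.1 j, w.2.2.1 j, w.2.2.2 j))
          (fun w => w.1) (fun w => w.2.1) (fun w => w.2.2.2)) ∧
    (condMI
        (fun w : M × (Fin n → X) × (Fin n → Y) × (Fin n → Z) =>
          κ w.2.1 w.1 * ∏ j, P (w.2.1 j, w.2.2.1 j, w.2.2.2 j))
        (fun w => w.1) (fun w => w.2.1) (fun w => w.2.2.2)
      ≤ entropy (pushf
          (fun w : M × (Fin n → X) × (Fin n → Y) × (Fin n → Z) =>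
            κ w.2.1 w.1 * ∏ j, P (w.2.1 j, w.2.2.1 j, w.2.2.2 j))
          (fun w => w.1))) ∧
    (entropy (pushf
        (fun w : M × (Fin n → X) × (Fin n → Y) × (Fin n → Z) =>
          κ w.2.1 w.1 * ∏ j, P (w.2.1 j, w.2.2.1 j, w.2.2.2 j))
        (fun w => w.1)) ≤ Real.log (Fintype.card M)) ∧
    (∑ i : Fin n,
        condMI
          (fun w : M × (Fin n → X) × (Fin n → Y) × (Fin n → Z) =>
            κ w.2.1 w.1 * ∏ j, P (w.2.1 j, w.2.2.1 j, w.2.2.2 j))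
          (fun w => (w.1, fun j : {j : Fin n // (j : ℕ) < (i : ℕ)} => w.2.2.1 j.1,
            fun j : {j : Fin n // (i : ℕ) < (j : ℕ)} => w.2.2.2 j.1))
          (fun w => w.2.1 i) (fun w => w.2.2.1 i)
      ≤ entropy (pushf
          (fun w : M × (Fin n → X) × (Fin n → Y) × (Fin n → Z) =>
            κ w.2.1 w.1 * ∏ j, P (w.2.1 j, w.2.2.1 j, w.2.2.2 j))
          (fun w => w.1))) := by
  classical
  change (∑ i : Fin n, condMI (jointP P κ) _ _ _ ≤ condMI (jointP P κ) _ _ _) ∧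
    (condMI (jointP P κ) _ _ _ ≤ entropy (pushf (jointP P κ) _)) ∧
    (entropy (pushf (jointP P κ) _) ≤ _) ∧
    (∑ i : Fin n, condMI (jointP P κ) _ _ _ ≤ entropy (pushf (jointP P κ) _))
  have hp0 := joint_nonneg P hP κ hκ
  have hp1 := joint_total P hP κ hκ
  have E1 := joint_E1 P hP κ hκ
  have E2 := joint_E2 P hP κ hκ
  set p := jointP P κ with hp
  have hs := entK_subm p hp0
  have h0 := entK_top p hp1
  let m : Setoid (M × (Fin n → X) × (Fin n → Y) × (Fin n → Z)) := Setoid.ker (fun w => w.1)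
  let x : Fin n → Setoid (M × (Fin n → X) × (Fin n → Y) × (Fin n → Z)) :=
    fun j => Setoid.ker (fun w => w.2.1 j)
  let y : Fin n → Setoid (M × (Fin n → X) × (Fin n → Y) × (Fin n → Z)) :=
    fun j => Setoid.ker (fun w => w.2.2.1 j)
  let z : Fin n → Setoid (M × (Fin n → X) × (Fin n → Y) × (Fin n → Z)) :=
    fun j => Setoid.ker (fun w => w.2.2.2 j)
  let Xs : Setoid (M × (Fin n → X) × (Fin n → Y) × (Fin n → Z)) := Setoid.ker (fun w => w.2.1)
  let Ys : Setoid (M × (Fin n → X) × (Fin n → Y) × (Fin n → Z)) := Setoid.ker (fun w => w.2.2.1)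
  let Zs : Setoid (M × (Fin n → X) × (Fin n → Y) × (Fin n → Z)) := Setoid.ker (fun w => w.2.2.2)
  have hX : Xs = Finset.univ.inf x := ker_pi_univ _
  have hY : Ys = Finset.univ.inf y := ker_pi_univ _
  have hZ : Zs = Finset.univ.inf z := ker_pi_univ _
  have kv : Setoid.ker (fun w : M × (Fin n → X) × (Fin n → Y) × (Fin n → Z) => w.2)
      = Xs ⊓ Ys ⊓ Zs := by
    rw [inf_assoc]
    exact (ker_pair (fun w : M × (Fin n → X) × (Fin n → Y) × (Fin n → Z) => w.2.1)
      (fun w => w.2.2)).trans (congrArg _ (ker_pair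
        (fun w : M × (Fin n → X) × (Fin n → Y) × (Fin n → Z) => w.2.2.1) (fun w => w.2.2.2)))
  have kw : Setoid.ker (fun w : M × (Fin n → X) × (Fin n → Y) × (Fin n → Z) => w)
      = m ⊓ Xs ⊓ Ys ⊓ Zs := by
    have : m ⊓ Xs ⊓ Ys ⊓ Zs = m ⊓ (Xs ⊓ Ys ⊓ Zs) := by ac_rfl
    rw [this, ← kv]
    exact ker_pair (fun w : M × (Fin n → X) × (Fin n → Y) × (Fin n → Z) => w.1) (fun w => w.2)
  have kj : ∀ j, Setoid.ker (fun w : M × (Fin n → X) × (Fin n → Y) × (Fin n → Z) => unz w.2 j)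
      = x j ⊓ y j ⊓ z j := by
    intro j
    rw [inf_assoc]
    exact (ker_pair (fun w : M × (Fin n → X) × (Fin n → Y) × (Fin n → Z) => w.2.1 j)
      (fun w => (w.2.2.1 j, w.2.2.2 j))).trans (congrArg _ (ker_pair _ _))
  simp only [entropy_ker, kv, kw, kj, ker_pair] at E1 E2
  have E1z : entK p (m ⊓ Xs ⊓ Zs ⊓ Ys) + entK p Xs = entK p (Xs ⊓ Zs ⊓ Ys) + entK p (m ⊓ Xs) := by
    rw [inf_right_comm _ Zs Ys, inf_right_comm _ Zs Ys]; exact E1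
  have E2z : entK p (Xs ⊓ Zs ⊓ Ys) = ∑ j, entK p (x j ⊓ z j ⊓ y j) := by
    rw [inf_right_comm _ Zs Ys, E2]
    exact Finset.sum_congr rfl fun j _ => by rw [inf_right_comm]
  have I1 := aux_abstract (J := Fin n) (entK p) h0 hs m x y z Xs Ys Zs hX hY hZ E1 E2
  have I2 := aux_abstract (J := (Fin n)ᵒᵈ) (entK p) h0 hs m x z y Xs Zs Ys hX hZ hY E1z E2z
  have ub : ∀ W : Setoid (M × (Fin n → X) × (Fin n → Y) × (Fin n → Z)),
      entK p (m ⊓ W) + entK p (Xs ⊓ W) - entK p (m ⊓ Xs ⊓ W) - entK p W ≤ entK p m := by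
    intro W
    have h1 := hs m W ⊤
    simp only [inf_top_eq, h0] at h1
    have h2 := aux_mono (entK p) hs (m ⊓ Xs ⊓ W) (Xs ⊓ W) (inf_le_inf_right _ inf_le_right)
    linarith
  have kU : ∀ i : Fin n, Setoid.ker (fun w : M × (Fin n → X) × (Fin n → Y) × (Fin n → Z) =>
      (w.1, fun j : {j : Fin n // (j : ℕ) < (i : ℕ)} => w.2.2.1 j.1,
            fun j : {j : Fin n // (i : ℕ) < (j : ℕ)} => w.2.2.2 j.1)) =
      m ⊓ (Finset.univ.filter (· < i)).inf y ⊓ (Finset.univ.filter (i < ·)).inf z := by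
    intro i
    rw [ker_pair, ker_pair, inf_assoc]
    congr 1
    congr 1
    · exact ker_pi (fun j : Fin n => j < i)
        (fun j (w : M × (Fin n → X) × (Fin n → Y) × (Fin n → Z)) => w.2.2.1 j)
    · exact ker_pi (fun j : Fin n => i < j)
        (fun j (w : M × (Fin n → X) × (Fin n → Y) × (Fin n → Z)) => w.2.2.2 j)
  have kU2 : ∀ i : Fin n, m ⊓ (Finset.univ.filter (i < ·)).inf z ⊓ (Finset.univ.filter (· < i)).inf y =
      m ⊓ (Finset.univ.filter (· < i)).inf y ⊓ (Finset.univ.filter (i < ·)).inf z :=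
    fun i => inf_right_comm _ _ _
  refine ⟨?_, ?_, ?_, ?_⟩
  · unfold condMI
    simp only [entropy_ker]
    refine le_trans (le_of_eq ?_) (I1.trans (le_of_eq ?_))
    · refine Finset.sum_congr rfl fun i _ => ?_
      simp only [ker_pair _ (fun w : M × (Fin n → X) × (Fin n → Y) × (Fin n → Z) => w.2.2.2 i),
        ker_pair _ (fun w : M × (Fin n → X) × (Fin n → Y) × (Fin n → Z) => (w.2.1 i, w.2.2.2 i)), kU,
        ← inf_assoc]
      rfl
    · simp only [ker_pair, ← inf_assoc]
      rfl
  · unfold condMI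
    simp only [entropy_ker, ker_pair, ← inf_assoc]
    exact ub Zs
  · exact entropy_le_log _ ⟨pushf_nonneg p hp0 _, (pushf_total p _).trans hp1⟩
  · unfold condMI
    simp only [entropy_ker]
    refine le_trans (le_of_eq ?_) (I2.trans (ub Ys))
    refine Finset.sum_congr rfl fun (i : Fin n) _ => ?_
    simp only [ker_pair _ (fun w : M × (Fin n → X) × (Fin n → Y) × (Fin n → Z) => w.2.2.1 i),
        ker_pair _ (fun w : M × (Fin n → X) × (Fin n → Y) × (Fin n → Z) => (w.2.1 i, w.2.2.1 i)), kU,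
        ← inf_assoc]
    rw [← kU2 i]
    rfl

end
end
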